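/- Let A_n be d×m real matrices with A_n → A_0, and let h_n ∈ ℝ^d with h_n ≥ 0 componentwise and h_n → h_0 componentwise in [0,∞]. If for every J ⊆ {1,…,d} and every n the rank of A_{J,n} (the submatrix of A_n of rows indexed by J) equals the rank of A_{J,0}, then poly(A_n,h_n) Kuratowski-converges to poly(A_0,h_0). -/

import Mathlib

/-!
The heart of the matter is a uniform Hoffman error bound. If `C` bounds `∑ |lam j|` by
`C * ‖∑ lam j • a j‖` whenever the rows supporting `lam` are linearly independent, then any point
`x₀` lies within `C * ∑ max (⟪a j, x₀⟫ - h j) 0` of `polyR a h` (`hoffman_bound`).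

The error bound is obtained by penalisation. A minimiser `x` of
`‖x - x₀‖ ^ 2 + k * ∑ (max (⟪a j, x⟫ - h j) 0) ^ 2` satisfies `x₀ - x = ∑ μ j • a j` with `μ ≥ 0`
supported on the violated constraints (`exists_penalty_point`). By Carathéodory's theorem for cones
(`conic_caratheodory`) the rows in the support may be taken linearly independent, and pairing with
`x₀ - x` then bounds `‖x₀ - x‖` independently of `k`; compactness lets `k → ∞`. This route
provides multipliers without Farkas' lemma.

The rank hypothesis says that rows of `A n` indexed by `J` are linearly independent exactly when
those of `A₀` are, so a constant valid for `A₀`, doubled, is valid for all `A n` close to `A₀`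
(`eventually_multiplier_bound`). The residuals `max (⟪A n j, x₀⟫ - h n j) 0` tend to zero for
`x₀ ∈ polyE A₀ h₀`, which gives the inner half of Kuratowski convergence; the outer half is passage
to the limit in the constraints with finite limiting right-hand side.
-/


open Filter Topology
open scoped RealInnerProductSpace ENNReal

noncomputable section

/-- The polyhedron `{x : ⟪A j, x⟫ ≤ h j for all j}` with real right-hand sides. -/
def polyR {d m : ℕ} (A : Fin d → EuclideanSpace ℝ (Fin m)) (h : Fin d → ℝ) :
    Set (EuclideanSpace ℝ (Fin m)) :=
  {x | ∀ j, ⟪A j, x⟫ ≤ h j}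

/-- The polyhedron with right-hand sides in `[0,∞]`: only the constraints with a finite
right-hand side are imposed. -/
def polyE {d m : ℕ} (A : Fin d → EuclideanSpace ℝ (Fin m)) (h : Fin d → ℝ≥0∞) :
    Set (EuclideanSpace ℝ (Fin m)) :=
  {x | ∀ j, h j ≠ ⊤ → ⟪A j, x⟫ ≤ (h j).toReal}

/-- Kuratowski convergence of a sequence of subsets of a topological space. -/
def KuratowskiTendsto {E : Type*} [TopologicalSpace E] (S : ℕ → Set E) (S₀ : Set E) : Prop :=
  (∀ x₀ ∈ S₀, ∃ x : ℕ → E, (∀ n, x n ∈ S n) ∧ Tendsto x atTop (nhds x₀)) ∧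
    ∀ (φ : ℕ → ℕ), StrictMono φ → ∀ (x : ℕ → E) (x₀ : E),
      (∀ q, x q ∈ S (φ q)) → Tendsto x atTop (nhds x₀) → x₀ ∈ S₀

end

/-! ### Conic combinations -/

/-- Carathéodory's theorem for cones: a conic combination can be rewritten with a smaller support
on which the vectors are linearly independent. -/
lemma conic_caratheodory {E : Type*} [AddCommGroup E] [Module ℝ E] {d : ℕ} (a : Fin d → E)
    (μ : Fin d → ℝ) (hμ : ∀ j, 0 ≤ μ j) :
    ∃ lam : Fin d → ℝ, (∀ j, 0 ≤ lam j) ∧ (∀ j, lam j ≠ 0 → μ j ≠ 0) ∧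
      ∑ j, lam j • a j = ∑ j, μ j • a j ∧ LinearIndepOn ℝ a {j | lam j ≠ 0} := by
  classical
  induction hN : (Finset.univ.filter (fun j => μ j ≠ 0)).card using Nat.strong_induction_on
    generalizing μ with
  | _ N ih =>
  by_cases hind : LinearIndepOn ℝ a {j | μ j ≠ 0}
  · exact ⟨μ, hμ, fun _ h => h, rfl, hind⟩
  · -- a dependence relation, with sign chosen so that some coefficient is positive
    obtain ⟨g, hgs, hg0, i, hgi⟩ : ∃ g : Fin d → ℝ, (∀ j, g j ≠ 0 → μ j ≠ 0) ∧
        ∑ j, g j • a j = 0 ∧ ∃ i, 0 < g i := by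
      obtain ⟨g, hgs, hg0, i, hgi⟩ : ∃ g : Fin d → ℝ, (∀ j, g j ≠ 0 → μ j ≠ 0) ∧
          ∑ j, g j • a j = 0 ∧ ∃ i, g i ≠ 0 := by
        have hind' : ¬ LinearIndependent ℝ (fun i : {j | μ j ≠ 0} => a i) := hind
        rw [Fintype.not_linearIndependent_iff] at hind'
        obtain ⟨g, hg, i, hi⟩ := hind'
        refine ⟨fun j => if hj : μ j ≠ 0 then g ⟨j, hj⟩ else 0, ?_, ?_, i, ?_⟩
        · intro j hj h0
          simp [h0] at hj
        · rw [← hg]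
          symm
          rw [← Finset.sum_filter_of_ne (p := fun j => μ j ≠ 0)
            (f := fun j => (if hj : μ j ≠ 0 then g ⟨j, hj⟩ else 0) • a j)]
          · rw [Finset.sum_subtype (p := fun j => μ j ≠ 0) _ (by simp)]
            refine Finset.sum_congr rfl fun j _ => ?_
            have hj : μ j ≠ 0 := j.2
            rw [dif_pos hj]
          · intro j _ hj h0
            simp [h0] at hj
        · have := i.2
          simp only [Set.mem_ofPred_eq] at this
          simpa [this] using hi
      rcases lt_or_gt_of_ne hgi with hlt | hgt
      · refine ⟨fun j => - g j, fun j hj => hgs j (by simpa using hj), ?_, i, by simpa using hlt⟩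
        simp [hg0]
      · exact ⟨g, hgs, hg0, i, hgt⟩
    obtain ⟨i₀, hi₀, hmin⟩ := (Finset.univ.filter (fun j => 0 < g j)).exists_min_image
      (fun j => μ j / g j) ⟨i, by simpa using hgi⟩
    have hgi₀ : 0 < g i₀ := by simpa using hi₀
    set t := μ i₀ / g i₀ with ht
    have ht0 : 0 ≤ t := div_nonneg (hμ _) hgi₀.le
    have hnn : ∀ j, 0 ≤ μ j - t * g j := by
      intro j
      rcases le_or_gt (g j) 0 with hj | hj
      · nlinarith [hμ j]
      · have := hmin j (by simpa using hj)
        rw [le_div_iff₀ hj] at this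
        linarith
    have hsup : ∀ j, μ j - t * g j ≠ 0 → μ j ≠ 0 := by
      intro j hj h0
      have : g j = 0 := by
        by_contra hg
        exact hgs j hg h0
      simp [h0, this] at hj
    have hz : μ i₀ - t * g i₀ = 0 := by
      rw [ht]; field_simp; ring
    obtain ⟨lam, h1, h2, h3, h4⟩ := ih _ (by
      rw [← hN]
      apply Finset.card_lt_card
      rw [Finset.ssubset_iff_of_subset]
      · refine ⟨i₀, by simpa using hgs i₀ hgi₀.ne', ?_⟩
        simp [hz]
      · intro j hj
        simp only [Finset.mem_filter, Finset.mem_univ, true_and] at hj ⊢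
        exact hsup j hj) (fun j => μ j - t * g j) hnn rfl
    refine ⟨lam, h1, fun j hj => hsup j (h2 j hj), ?_, h4⟩
    rw [h3]
    simp only [sub_smul, Finset.sum_sub_distrib, mul_smul, ← Finset.smul_sum, hg0, smul_zero,
      sub_zero]

/-! ### Penalisation and the error bound -/

/-- First-order condition for the quadratic penalty problem: its minimiser displaces `x₀` along a
conic combination of the violated rows, and its residuals are at most of order `1 / √k` because
`0` is feasible. -/
lemma exists_penalty_point {d m : ℕ} (a : Fin d → EuclideanSpace ℝ (Fin m)) (h : Fin d → ℝ)
    (hnn : ∀ j, 0 ≤ h j) (x₀ : EuclideanSpace ℝ (Fin m)) (k : ℝ) (hk : 0 < k) :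
    ∃ x, k * ∑ j, (max (⟪a j, x⟫ - h j) 0) ^ 2 ≤ ‖x₀‖ ^ 2 ∧
      x₀ - x = ∑ j, (k * max (⟪a j, x⟫ - h j) 0) • a j := by
  set F : EuclideanSpace ℝ (Fin m) → ℝ :=
    fun x => ‖x - x₀‖ ^ 2 + k * ∑ j, (max (⟪a j, x⟫ - h j) 0) ^ 2 with hF
  have hFc : Continuous F := by
    rw [hF]; fun_prop
  have hS : ∀ x, 0 ≤ ∑ j, (max (⟪a j, x⟫ - h j) 0) ^ 2 := fun x =>
    Finset.sum_nonneg fun j _ => sq_nonneg _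
  have hF0 : F 0 = ‖x₀‖ ^ 2 := by
    have : ∀ j, max (- h j) 0 = 0 := fun j => max_eq_right (by linarith [hnn j])
    simp [hF, this]
  -- outside this ball the quadratic term alone exceeds `F 0`
  obtain ⟨x, -, hx'⟩ := (isCompact_closedBall x₀ ‖x₀‖).exists_isMinOn
    (f := F) ⟨0, by simp⟩ hFc.continuousOn
  have hx0 : F x ≤ F 0 := hx' (by simp : (0 : EuclideanSpace ℝ (Fin m)) ∈ _)
  have hx : ∀ y, F x ≤ F y := by
    intro y
    by_cases hy : y ∈ Metric.closedBall x₀ ‖x₀‖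
    · exact hx' hy
    · rw [mem_closedBall_iff_norm, not_le] at hy
      refine hx0.trans ?_
      rw [hF0]
      have := hS y
      simp only [hF]
      nlinarith [norm_nonneg x₀, mul_nonneg hk.le this]
  refine ⟨x, ?_, ?_⟩
  · rw [hF0] at hx0
    simp only [hF] at hx0
    nlinarith [sq_nonneg ‖x - x₀‖]
  · set r : Fin d → ℝ := fun j => max (⟪a j, x⟫ - h j) 0 with hr
    set w : EuclideanSpace ℝ (Fin m) := (x - x₀) + ∑ j, (k * r j) • a j with hw
    set K : ℝ := ‖w‖ ^ 2 + k * ∑ j, ⟪a j, w⟫ ^ 2 with hK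
    have hK0 : 0 ≤ K := by positivity
    have hww : ⟪x - x₀, w⟫ + k * ∑ j, r j * ⟪a j, w⟫ = ‖w‖ ^ 2 := by
      rw [← real_inner_self_eq_norm_sq w]
      conv_rhs => rw [hw]
      rw [← hw, inner_add_left, sum_inner, Finset.mul_sum]
      congr 1
      refine Finset.sum_congr rfl fun j _ => ?_
      rw [real_inner_smul_left]; ring
    have key : ∀ t : ℝ, F (x - t • w) ≤ F x - 2 * t * ‖w‖ ^ 2 + t ^ 2 * K := by
      intro t
      have h1 : ‖x - t • w - x₀‖ ^ 2 = ‖x - x₀‖ ^ 2 - 2 * t * ⟪x - x₀, w⟫ + t ^ 2 * ‖w‖ ^ 2 := by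
        rw [show x - t • w - x₀ = (x - x₀) - t • w by abel, norm_sub_sq_real,
          real_inner_smul_right, norm_smul, mul_pow, Real.norm_eq_abs, sq_abs]
        ring
      have h2 : ∑ j, (max (⟪a j, x - t • w⟫ - h j) 0) ^ 2 ≤
          ∑ j, ((r j) ^ 2 - 2 * t * (r j * ⟪a j, w⟫) + t ^ 2 * ⟪a j, w⟫ ^ 2) := by
        refine Finset.sum_le_sum fun j _ => ?_
        rw [inner_sub_right, real_inner_smul_right]
        simp only [hr]
        generalize ⟪a j, x⟫ = p
        generalize ⟪a j, w⟫ = q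
        -- `(u + s)₊ ≤ |u₊ + s|`
        have : (max (p - t * q - h j) 0) ≤ |max (p - h j) 0 - t * q| := by
          refine max_le ?_ (abs_nonneg _)
          refine le_trans ?_ (le_abs_self _)
          linarith [le_max_left (p - h j) 0]
        calc _ ≤ |max (p - h j) 0 - t * q| ^ 2 := by
              gcongr
          _ = _ := by rw [sq_abs]; ring
      rw [Finset.sum_add_distrib, Finset.sum_sub_distrib, ← Finset.mul_sum, ← Finset.mul_sum] at h2
      have h3 := mul_le_mul_of_nonneg_left h2 hk.le
      simp only [hF, h1, hK, ← hww]
      simp only [hr] at h3 ⊢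
      linarith
    have hw0 : ‖w‖ ^ 2 = 0 := by
      have := (hx _).trans (key (‖w‖ ^ 2 / (K + 1)))
      have h4 : 0 ≤ - 2 * (‖w‖ ^ 2 / (K + 1)) * ‖w‖ ^ 2 + (‖w‖ ^ 2 / (K + 1)) ^ 2 * K := by
        linarith
      set s := ‖w‖ ^ 2 / (K + 1) with hs
      have hws : ‖w‖ ^ 2 = s * (K + 1) := by rw [hs]; field_simp
      rw [hws] at h4 ⊢
      have : s ^ 2 ≤ 0 := by nlinarith [sq_nonneg s, mul_nonneg (sq_nonneg s) hK0]
      have : s = 0 := by nlinarith [sq_nonneg s]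
      simp [this]
    have : w = 0 := by simpa using hw0
    rw [hw] at this
    have h5 := eq_neg_of_add_eq_zero_right this
    rw [h5]; abel

/-- Hoffman's error bound, with a constant depending only on how well conditioned the linearly
independent subfamilies of rows are. -/
lemma hoffman_bound {d m : ℕ} (a : Fin d → EuclideanSpace ℝ (Fin m)) (h : Fin d → ℝ)
    (hnn : ∀ j, 0 ≤ h j) (C : ℝ) (hC0 : 0 ≤ C)
    (hC : ∀ lam : Fin d → ℝ, LinearIndepOn ℝ a {j | lam j ≠ 0} →
      ∑ j, |lam j| ≤ C * ‖∑ j, lam j • a j‖)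
    (x₀ : EuclideanSpace ℝ (Fin m)) :
    ∃ x ∈ polyR a h, ‖x - x₀‖ ≤ C * ∑ j, max (⟪a j, x₀⟫ - h j) 0 := by
  set R := ∑ j, max (⟪a j, x₀⟫ - h j) 0 with hR
  have hR0 : 0 ≤ R := Finset.sum_nonneg fun j _ => le_max_right _ _
  have step : ∀ k : ℝ, 0 < k → ∃ x ∈ Metric.closedBall x₀ (C * R),
      k * ∑ j, (max (⟪a j, x⟫ - h j) 0) ^ 2 ≤ ‖x₀‖ ^ 2 := by
    intro k hk
    obtain ⟨x, hx1, hx2⟩ := exists_penalty_point a h hnn x₀ k hk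
    refine ⟨x, ?_, hx1⟩
    obtain ⟨lam, hl0, hls, hle, hli⟩ := conic_caratheodory a
      (fun j => k * max (⟪a j, x⟫ - h j) 0) (fun j => by positivity)
    rw [← hx2] at hle
    have h1 := hC lam hli
    rw [hle] at h1
    have h2 : ‖x₀ - x‖ ^ 2 ≤ ∑ j, |lam j| * R := by
      rw [← real_inner_self_eq_norm_sq]
      nth_rewrite 1 [← hle]
      rw [sum_inner]
      refine Finset.sum_le_sum fun j _ => ?_
      rw [real_inner_smul_left, abs_of_nonneg (hl0 j)]
      rcases eq_or_ne (lam j) 0 with h0 | h0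
      · simp [h0]
      · refine mul_le_mul_of_nonneg_left ?_ (hl0 j)
        -- the constraint `j` is violated at `x`, as `j` is in the support
        have hv : 0 < ⟪a j, x⟫ - h j := by
          by_contra hcon
          exact hls j h0 (by simp [max_eq_right (not_lt.1 hcon)])
        rw [inner_sub_right]
        calc ⟪a j, x₀⟫ - ⟪a j, x⟫ ≤ ⟪a j, x₀⟫ - h j := by linarith
          _ ≤ max (⟪a j, x₀⟫ - h j) 0 := le_max_left _ _
          _ ≤ R := Finset.single_le_sum (f := fun j => max (⟪a j, x₀⟫ - h j) 0)
              (fun i _ => le_max_right _ _) (Finset.mem_univ j)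
    rw [← Finset.sum_mul] at h2
    rw [mem_closedBall_iff_norm, norm_sub_rev]
    have h3 := h2.trans (mul_le_mul_of_nonneg_right h1 hR0)
    rcases (norm_nonneg (x₀ - x)).eq_or_lt with h0 | h0
    · rw [← h0]; positivity
    · refine le_of_mul_le_mul_left ?_ h0
      linarith
  -- the total squared residual attains its minimum on the ball, and that minimum is zero
  obtain ⟨x, hx, hmin⟩ := (isCompact_closedBall x₀ (C * R)).exists_isMinOn
    (f := fun x => ∑ j, (max (⟪a j, x⟫ - h j) 0) ^ 2)
    ⟨x₀, Metric.mem_closedBall_self (by positivity)⟩ (by fun_prop)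
  refine ⟨x, ?_, mem_closedBall_iff_norm.1 hx⟩
  have hle : ∑ j, (max (⟪a j, x⟫ - h j) 0) ^ 2 ≤ 0 := by
    by_contra hcon
    push Not at hcon
    set s := ∑ j, (max (⟪a j, x⟫ - h j) 0) ^ 2 with hs
    obtain ⟨y, hy, hy'⟩ := step ((‖x₀‖ ^ 2 + 1) / s) (by positivity)
    have h1 : s ≤ ∑ j, (max (⟪a j, y⟫ - h j) 0) ^ 2 := hmin hy
    have h2 : (‖x₀‖ ^ 2 + 1) / s * s ≤ ‖x₀‖ ^ 2 :=
      (mul_le_mul_of_nonneg_left h1 (by positivity)).trans hy'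
    rw [div_mul_cancel₀ _ hcon.ne'] at h2
    linarith
  intro j
  have h1 : (max (⟪a j, x⟫ - h j) 0) ^ 2 ≤ 0 :=
    (Finset.single_le_sum (f := fun j => (max (⟪a j, x⟫ - h j) 0) ^ 2)
      (fun i _ => sq_nonneg _) (Finset.mem_univ j)).trans hle
  have h2 : max (⟪a j, x⟫ - h j) 0 = 0 :=
    pow_eq_zero_iff two_ne_zero |>.1 (le_antisymm h1 (sq_nonneg _))
  have := max_eq_right_iff.1 h2
  linarith

/-! ### Uniform bounds on multipliers -/

/-- A common bound for the coefficients of linear combinations over linearly independent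
subfamilies; only finitely many supports occur. -/
lemma exists_multiplier_bound {d m : ℕ} (a : Fin d → EuclideanSpace ℝ (Fin m)) :
    ∃ C : ℝ, 0 ≤ C ∧ ∀ lam : Fin d → ℝ, LinearIndepOn ℝ a {j | lam j ≠ 0} →
      ∑ j, |lam j| ≤ C * ‖∑ j, lam j • a j‖ := by
  classical
  have hJ : ∀ J : Set (Fin d), ∃ C : ℝ, 0 ≤ C ∧ (LinearIndepOn ℝ a J →
      ∀ lam : Fin d → ℝ, {j | lam j ≠ 0} = J → ∑ j, |lam j| ≤ C * ‖∑ j, lam j • a j‖) := by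
    intro J
    by_cases hli : LinearIndepOn ℝ a J
    · let f : (J → ℝ) →ₗ[ℝ] EuclideanSpace ℝ (Fin m) :=
        Fintype.linearCombination ℝ (fun j : J => a j)
      have hf : LinearMap.ker f = ⊥ := by
        have : LinearIndependent ℝ (fun j : J => a j) := hli
        exact LinearMap.ker_eq_bot.2 (linearIndependent_iff_injective_fintypeLinearCombination.1 this)
      obtain ⟨K, -, hK⟩ := f.exists_antilipschitzWith hf
      refine ⟨d * K, by positivity, fun _ lam hlam => ?_⟩
      have h1 := hK.le_mul_dist (fun j : J => lam j) 0
      rw [map_zero, dist_zero_right, dist_zero_right] at h1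
      have hfl : f (fun j : J => lam j) = ∑ j, lam j • a j := by
        rw [← Finset.sum_filter_of_ne (p := fun j => j ∈ J)]
        · rw [Finset.sum_subtype (F := inferInstanceAs (Fintype J)) (p := fun j => j ∈ J) _ (by simp)]
          simp [f, Fintype.linearCombination_apply]
        · intro j _ hj
          rw [← hlam]
          intro h0
          simp [h0] at hj
      rw [hfl] at h1
      have h2 : ∀ j, |lam j| ≤ K * ‖∑ j, lam j • a j‖ := by
        intro j
        by_cases hj : j ∈ J
        · exact (norm_le_pi_norm (fun j : J => lam j) ⟨j, hj⟩).trans h1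
        · have : lam j = 0 := by
            by_contra h0
            exact hj (hlam ▸ h0)
          rw [this, abs_zero]; positivity
      calc ∑ j, |lam j| ≤ ∑ _j : Fin d, K * ‖∑ j, lam j • a j‖ :=
            Finset.sum_le_sum fun j _ => h2 j
        _ = _ := by simp [mul_assoc]
    · exact ⟨0, le_rfl, fun h => absurd h hli⟩
  choose C hC0 hC using hJ
  refine ⟨∑ J, C J, Finset.sum_nonneg fun J _ => hC0 J, fun lam hlam => ?_⟩
  refine (hC _ hlam lam rfl).trans ?_
  gcongr
  exact Finset.single_le_sum (f := C) (fun J _ => hC0 J) (Finset.mem_univ _)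

/-- Stability of the multiplier bound: linear independence transfers from the rows of `A n` to those
of `A₀` by the rank condition, and a small perturbation at most doubles the constant. -/
lemma eventually_multiplier_bound {d m : ℕ}
    (A : ℕ → Fin d → EuclideanSpace ℝ (Fin m)) (A₀ : Fin d → EuclideanSpace ℝ (Fin m))
    (hA : Tendsto A atTop (nhds A₀))
    (hrk : ∀ (J : Set (Fin d)) (n : ℕ),
      Module.finrank ℝ (Submodule.span ℝ (A n '' J)) =
        Module.finrank ℝ (Submodule.span ℝ (A₀ '' J))) :
    ∃ C : ℝ, 0 ≤ C ∧ ∀ᶠ n in atTop, ∀ lam : Fin d → ℝ,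
      LinearIndepOn ℝ (A n) {j | lam j ≠ 0} → ∑ j, |lam j| ≤ C * ‖∑ j, lam j • A n j‖ := by
  classical
  obtain ⟨C, hC0, hC⟩ := exists_multiplier_bound A₀
  refine ⟨2 * C, by positivity, ?_⟩
  have hε : (0 : ℝ) < 1 / (2 * (C + 1)) := by positivity
  filter_upwards [Metric.tendsto_nhds.1 hA _ hε] with n hn lam hlam
  have hli : LinearIndepOn ℝ A₀ {j | lam j ≠ 0} := by
    set J := {j | lam j ≠ 0}
    have h1 : LinearIndependent ℝ (fun j : J => A n j) := hlam
    change LinearIndependent ℝ (fun j : J => A₀ j)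
    rw [linearIndependent_iff_card_eq_finrank_span] at h1 ⊢
    rw [h1]
    have := hrk J n
    rw [Set.image_eq_range, Set.image_eq_range] at this
    exact this
  have h1 := hC lam hli
  have h2 : ‖∑ j, lam j • A₀ j‖ ≤
      ‖∑ j, lam j • A n j‖ + (∑ j, |lam j|) * (1 / (2 * (C + 1))) := by
    have h3 : ∑ j, lam j • A₀ j = ∑ j, lam j • A n j - ∑ j, lam j • (A n j - A₀ j) := by
      rw [← Finset.sum_sub_distrib]
      refine Finset.sum_congr rfl fun j _ => ?_
      rw [smul_sub]; abel
    rw [h3]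
    refine (norm_sub_le _ _).trans ?_
    gcongr
    rw [Finset.sum_mul]
    refine (norm_sum_le _ _).trans (Finset.sum_le_sum fun j _ => ?_)
    rw [norm_smul, Real.norm_eq_abs]
    gcongr
    rw [← dist_eq_norm]
    exact (dist_le_pi_dist _ _ j).trans hn.le
  have h4 := h1.trans (mul_le_mul_of_nonneg_left h2 hC0)
  have h5 : C * (1 / (2 * (C + 1))) ≤ 1 / 2 := by
    rw [mul_one_div, div_le_div_iff₀ (by positivity) (by norm_num)]
    linarith
  have h6 : 0 ≤ ∑ j, |lam j| := Finset.sum_nonneg fun j _ => abs_nonneg _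
  nlinarith [mul_le_mul_of_nonneg_right h5 h6]

/-! ### Kuratowski convergence -/

lemma tendsto_of_ofReal_tendsto {u : ℕ → ℝ} (hu : ∀ n, 0 ≤ u n) {l : ℝ≥0∞} (hl : l ≠ ⊤)
    (h : Tendsto (fun n => ENNReal.ofReal (u n)) atTop (nhds l)) :
    Tendsto u atTop (nhds l.toReal) := by
  have := (ENNReal.tendsto_toReal hl).comp h
  refine this.congr fun n => ?_
  simp [ENNReal.toReal_ofReal (hu n)]

/-- If `A_n → A₀`, `0 ≤ h_n → h₀` componentwise in `[0,∞]`, and for every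
`J ⊆ {1,…,d}` and every `n` the rank of the rows of `A_n` indexed by `J` equals that of the
corresponding rows of `A₀`, then `poly(A_n,h_n)` Kuratowski-converges to `poly(A₀,h₀)`. -/
theorem statement16 {d m : ℕ}
    (A : ℕ → Fin d → EuclideanSpace ℝ (Fin m)) (A₀ : Fin d → EuclideanSpace ℝ (Fin m))
    (hA : Tendsto A atTop (nhds A₀))
    (h : ℕ → Fin d → ℝ) (hnn : ∀ n j, 0 ≤ h n j) (h₀ : Fin d → ℝ≥0∞)
    (hh : ∀ j, Tendsto (fun n => ENNReal.ofReal (h n j)) atTop (nhds (h₀ j)))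
    (hrk : ∀ (J : Set (Fin d)) (n : ℕ),
      Module.finrank ℝ (Submodule.span ℝ (A n '' J)) =
        Module.finrank ℝ (Submodule.span ℝ (A₀ '' J))) :
    KuratowskiTendsto (fun n => polyR (A n) (h n)) (polyE A₀ h₀) := by
  classical
  have hAj : ∀ j, Tendsto (fun n => A n j) atTop (nhds (A₀ j)) := fun j =>
    tendsto_pi_nhds.1 hA j
  refine ⟨fun x₀ hx₀ => ?_, fun φ hφ x x₀ hx hlim j hj => ?_⟩
  · obtain ⟨C, hC0, hC⟩ := eventually_multiplier_bound A A₀ hA hrk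
    have hres : ∀ j, Tendsto (fun n => max (⟪A n j, x₀⟫ - h n j) 0) atTop (nhds 0) := by
      intro j
      have hin : Tendsto (fun n => ⟪A n j, x₀⟫) atTop (nhds ⟪A₀ j, x₀⟫) :=
        (hAj j).inner tendsto_const_nhds
      by_cases hj : h₀ j = ⊤
      · -- the constraint is eventually slack at `x₀`
        have h1 : ∀ᶠ n in atTop, ENNReal.ofReal (⟪A₀ j, x₀⟫ + 1) < ENNReal.ofReal (h n j) := by
          have := hh j
          rw [hj] at this
          exact this.eventually (lt_mem_nhds ENNReal.ofReal_lt_top)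
        have h2 : ∀ᶠ n in atTop, ⟪A n j, x₀⟫ < ⟪A₀ j, x₀⟫ + 1 :=
          hin.eventually (gt_mem_nhds (by linarith))
        refine tendsto_const_nhds.congr' ?_
        filter_upwards [h1, h2] with n h1 h2
        have h3 : ⟪A₀ j, x₀⟫ + 1 < h n j := by
          by_contra hcon
          exact absurd h1 (not_lt.2 (ENNReal.ofReal_le_ofReal (not_lt.1 hcon)))
        rw [max_eq_right]
        linarith
      · have h1 := (hin.sub (tendsto_of_ofReal_tendsto (fun n => hnn n j) hj (hh j))).max
          (tendsto_const_nhds (x := (0 : ℝ)))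
        rwa [max_eq_right (by linarith [hx₀ j hj])] at h1
    have hbound : Tendsto (fun n => C * ∑ j, max (⟪A n j, x₀⟫ - h n j) 0) atTop (nhds 0) := by
      have := (tendsto_finsetSum Finset.univ fun j _ => hres j).const_mul C
      simpa using this
    -- the finitely many indices without an error bound are served by the feasible point `0`
    have hex : ∀ n, ∃ x ∈ polyR (A n) (h n),
        (∀ lam : Fin d → ℝ, LinearIndepOn ℝ (A n) {j | lam j ≠ 0} →
          ∑ j, |lam j| ≤ C * ‖∑ j, lam j • A n j‖) →
        ‖x - x₀‖ ≤ C * ∑ j, max (⟪A n j, x₀⟫ - h n j) 0 := by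
      intro n
      by_cases hn : ∀ lam : Fin d → ℝ, LinearIndepOn ℝ (A n) {j | lam j ≠ 0} →
          ∑ j, |lam j| ≤ C * ‖∑ j, lam j • A n j‖
      · obtain ⟨x, hx, hx'⟩ := hoffman_bound (A n) (h n) (hnn n) C hC0 hn x₀
        exact ⟨x, hx, fun _ => hx'⟩
      · exact ⟨0, fun j => by simpa using hnn n j, fun h => absurd h hn⟩
    choose x hx hx' using hex
    refine ⟨x, hx, ?_⟩
    rw [tendsto_iff_norm_sub_tendsto_zero]
    refine squeeze_zero' (Eventually.of_forall fun n => norm_nonneg _) ?_ hbound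
    filter_upwards [hC] with n hn using hx' n hn
  · have h1 : Tendsto (fun q => ⟪A (φ q) j, x q⟫) atTop (nhds ⟪A₀ j, x₀⟫) :=
      ((hAj j).comp hφ.tendsto_atTop).inner hlim
    have h2 := (tendsto_of_ofReal_tendsto (fun n => hnn n j) hj (hh j)).comp hφ.tendsto_atTop
    exact le_of_tendsto_of_tendsto' h1 h2 fun q => hx q j
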